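/- arXiv:1703.09328 — 3 statements merged into one kernel-verified Lean document; each statement's English description precedes it below -/
import Mathlib

section
/- For every type A and every partial function h : A →. (Unit ⊕ A), there exists a unique partial function f : A →. ℕ satisfying, for all a : A, f a = (h a).bind (Sum.elim (fun _ => Part.some 0) (fun a' => Part.map Nat.succ (f a'))). Equivalently, the pair (ℕ, α), where α : ℕ →. (Unit ⊕ ℕ) is the total map with α 0 = Part.some (Sum.inl ()) and α (n+1) = Part.some (Sum.inr n), is a terminal coalgebra for the endofunctor sending X to Unit ⊕ X on the category of sets and partial functions. -/
/-!
Consider the equation `f a = (h a).bind (Sum.elim z fun a' => (f a').bind s)`, with `z = 0` and `s`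
the successor in the case of interest. Partial functions `A →. C`, ordered by extension, form an
`ω`-complete partial order in which the right-hand side is Scott continuous in `f`, so Kleene's
fixed point theorem yields a solution. For uniqueness, unfold the equation at a value `c` of a
solution: either `c` is produced by `z` when `h` stops, or `c ∈ s d` for an earlier value `d`.
When this relation between `d` and `c` is well-founded, as it is for the successor on `ℕ`, induction
on `c` shows that any two solutions have the same graph.
-/

open Function OmegaCompletePartialOrder

universe u v w

section

variable {A : Type u} {B : Type v} {C : Type w}

/-- The operator whose fixed points are the coalgebra-to-algebra morphisms (hylomorphisms) in the
category of sets and partial functions, from a coalgebra `h` of `X ↦ B ⊕ X` to an algebra on `C`.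
The structure map `B ⊕ C →. C` of the algebra is given by its two components `z` and `s`.
Partial functions are written `A → Part C` rather than `A →. C`, since Mathlib orders the former. -/
def hyloStep (h : A → Part (B ⊕ A)) (z : B → Part C) (s : C → Part C) (f : A → Part C) :
    A → Part C :=
  fun a => (h a).bind (Sum.elim z fun a' => (f a').bind s)

variable {h : A → Part (B ⊕ A)} {z : B → Part C} {s : C → Part C} {f g : A → Part C}

theorem mem_hyloStep_iff {a : A} {c : C} :
    c ∈ hyloStep h z s f a ↔
      (∃ b, Sum.inl b ∈ h a ∧ c ∈ z b) ∨ ∃ a', Sum.inr a' ∈ h a ∧ ∃ d ∈ f a', c ∈ s d := by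
  simp [hyloStep]

variable (h z s) in
theorem ωScottContinuous_hyloStep : ωScottContinuous (hyloStep h z s) := by
  refine .of_apply₂ fun a => ?_
  unfold hyloStep
  induction h a using Part.induction_on with
  | hnone =>
    simp only [Part.bind_none]
    exact ωScottContinuous.const
  | hsome x =>
    simp only [Part.bind_some]
    cases x with
    | inl b => exact ωScottContinuous.const
    | inr a' => exact ContinuousHom.ωScottContinuous.bind (.apply₂ .id a') .const

variable (h z s) in
theorem exists_isFixedPt_hyloStep : ∃ f, IsFixedPt (hyloStep h z s) f :=
  ⟨_, (LawfulFix.fix_eq (ωScottContinuous_hyloStep h z s)).symm⟩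

theorem eq_of_isFixedPt_hyloStep (wf : WellFounded fun d c => c ∈ s d)
    (hf : IsFixedPt (hyloStep h z s) f) (hg : IsFixedPt (hyloStep h z s) g) : f = g := by
  suffices mem_iff : ∀ c a, c ∈ f a ↔ c ∈ g a from funext fun a => Part.ext fun c => mem_iff c a
  intro c
  induction c using wf.induction with
  | _ c ih =>
    intro a
    rw [← congrFun hf a, ← congrFun hg a, mem_hyloStep_iff, mem_hyloStep_iff]
    exact or_congr_right <| exists_congr fun a' => and_congr_right fun _ =>
      exists_congr fun d => and_congr_left fun hd => ih d hd a'

end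

theorem terminal_coalgebra_pfun_general {A : Type u} {B : Type v} {C : Type w}
    (h : A →. B ⊕ A) (z : B →. C) (s : C →. C) (wf : WellFounded fun d c => c ∈ s d) :
    ∃! f : A →. C, ∀ a, f a = (h a).bind (Sum.elim z fun a' => (f a').bind s) := by
  obtain ⟨f, hf⟩ := exists_isFixedPt_hyloStep h z s
  exact ⟨f, fun a => (congrFun hf a).symm,
    fun g hg => eq_of_isFixedPt_hyloStep wf (funext fun a => (hg a).symm) hf⟩

theorem wellFounded_mem_some_succ : WellFounded fun m n : ℕ => n ∈ Part.some m.succ :=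
  wellFounded_lt.mono fun m _ hn => (Part.mem_some_iff.1 hn).symm ▸ m.lt_succ_self

/-- For every type `A` and every partial function
`h : A →. (Unit ⊕ A)` (a coalgebra for the endofunctor `X ↦ Unit ⊕ X` on the
category of sets and partial functions), there exists a unique partial
function `f : A →. ℕ` satisfying the coalgebra-morphism equation into the
terminal coalgebra `(ℕ, α)`. -/
theorem terminal_coalgebra_pfun (A : Type) (h : A →. (Unit ⊕ A)) :
    ∃! f : A →. ℕ, ∀ a : A,
      f a = (h a).bind
        (Sum.elim (fun _ => Part.some 0) (fun a' => Part.map Nat.succ (f a'))) := by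
  simpa only [Part.bind_some_eq_map] using
    terminal_coalgebra_pfun_general h (fun _ => Part.some 0) (fun n => Part.some n.succ)
      wellFounded_mem_some_succ
end

section
/- Let h : A →. (Unit ⊕ A) be a partial function and let f : A →. ℕ be the unique partial function satisfying f a = (h a).bind (Sum.elim (fun _ => Part.some 0) (fun a' => Part.map Nat.succ (f a'))) for all a : A. Then for all a : A and n : ℕ, n ∈ f a if and only if there exists a sequence seq : ℕ → A with seq 0 = a such that h (seq k) = Part.some (Sum.inr (seq (k+1))) for all k < n and h (seq n) = Part.some (Sum.inl ()). In particular, f a is undefined exactly when the iteration of h starting from a never reaches an inl-value. -/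
/-!
Comparing the fixed-point equation with `0` and with `n + 1` shows that `0 ∈ f a` means that `h`
halts at `a`, and that `n + 1 ∈ f a` means that `h` steps from `a` to some `a'` with `n ∈ f a'`.
Deleting or prepending the first entry of a path shows that the existence of a halting path of
length `n` from `a` satisfies the same recursion on `n`.
-/

universe u v

/-- From `a` there is an `r`-path of length `n` to a point satisfying `q`. The path is an infinite
sequence whose entries beyond index `n` are unconstrained. -/
def ReachesIn {α : Type u} (r : α → α → Prop) (q : α → Prop) (n : ℕ) (a : α) : Prop :=
  ∃ seq : ℕ → α, seq 0 = a ∧ (∀ k < n, r (seq k) (seq (k + 1))) ∧ q (seq n)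

namespace ReachesIn

variable {α : Type u} {r : α → α → Prop} {q : α → Prop} {n : ℕ} {a a' : α}

theorem zero_iff : ReachesIn r q 0 a ↔ q a := by
  constructor
  · rintro ⟨seq, rfl, -, hq⟩
    exact hq
  · intro hq
    exact ⟨fun _ => a, rfl, fun k hk => absurd hk k.not_lt_zero, hq⟩

theorem cons (hr : r a a') (ha' : ReachesIn r q n a') : ReachesIn r q (n + 1) a := by
  obtain ⟨seq, rfl, hstep, hq⟩ := ha'
  refine ⟨fun k => Nat.casesOn k a seq, rfl, fun k hk => ?_, hq⟩
  cases k with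
  | zero => exact hr
  | succ k => exact hstep k (Nat.lt_of_succ_lt_succ hk)

theorem exists_step (ha : ReachesIn r q (n + 1) a) : ∃ a', r a a' ∧ ReachesIn r q n a' := by
  obtain ⟨seq, rfl, hstep, hq⟩ := ha
  exact ⟨seq 1, hstep 0 n.succ_pos, fun k => seq (k + 1), rfl,
    fun k hk => hstep (k + 1) (Nat.succ_lt_succ hk), hq⟩

theorem succ_iff : ReachesIn r q (n + 1) a ↔ ∃ a', r a a' ∧ ReachesIn r q n a' :=
  ⟨exists_step, fun ⟨_, hr, ha'⟩ => cons hr ha'⟩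

end ReachesIn

/-- `f` is a morphism from the coalgebra `(A, h)`, with the exit values in `B` collapsed to `Unit`,
to the terminal coalgebra `(ℕ, α)` of `X ↦ Unit ⊕ X`. The morphism square `α ∘ f = (id ⊕ f) ∘ h` is
solved for `f` by inverting the bijection `α`, where `α 0 = inl ()` and `α (n + 1) = inr n`. -/
def IsNatCoalgebraMorphism {A : Type u} {B : Type v} (h : A →. B ⊕ A) (f : A →. ℕ) : Prop :=
  ∀ a, f a = (h a).bind
    (Sum.elim (fun _ => Part.some 0) (fun a' => Part.map Nat.succ (f a')))

namespace IsNatCoalgebraMorphism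

variable {A : Type u} {B : Type v} {h : A →. B ⊕ A} {f : A →. ℕ}

theorem zero_mem_iff (hf : IsNatCoalgebraMorphism h f) (a : A) :
    0 ∈ f a ↔ ∃ b, h a = Part.some (Sum.inl b) := by
  simp [hf a, Part.eq_some_iff]

theorem succ_mem_iff (hf : IsNatCoalgebraMorphism h f) (a : A) (n : ℕ) :
    n + 1 ∈ f a ↔ ∃ a', h a = Part.some (Sum.inr a') ∧ n ∈ f a' := by
  simp [hf a, Part.eq_some_iff]

theorem mem_iff_reachesIn (hf : IsNatCoalgebraMorphism h f) (a : A) (n : ℕ) :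
    n ∈ f a ↔ ReachesIn (fun x y => h x = Part.some (Sum.inr y))
      (fun x => ∃ b, h x = Part.some (Sum.inl b)) n a := by
  induction n generalizing a with
  | zero => rw [hf.zero_mem_iff, ReachesIn.zero_iff]
  | succ n ih => simp only [hf.succ_mem_iff, ReachesIn.succ_iff, ih]

end IsNatCoalgebraMorphism

theorem mem_coalgebra_morphism_iff_seq_general {A : Type u} {B : Type v} (h : A →. B ⊕ A)
    (f : A →. ℕ)
    (hf : ∀ a : A,
      f a = (h a).bind
        (Sum.elim (fun _ => Part.some 0) (fun a' => Part.map Nat.succ (f a')))) :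
    ∀ (a : A) (n : ℕ),
      n ∈ f a ↔
        ∃ seq : ℕ → A, seq 0 = a ∧
          (∀ k < n, h (seq k) = Part.some (Sum.inr (seq (k + 1)))) ∧
          ∃ b, h (seq n) = Part.some (Sum.inl b) :=
  IsNatCoalgebraMorphism.mem_iff_reachesIn hf

/-- If `f : A →. ℕ` is the (unique) coalgebra morphism from
`(A, h)` into the terminal coalgebra `(ℕ, α)` of `X ↦ Unit ⊕ X` on the
category of sets and partial functions, i.e. `f` satisfies the stated
fixed-point equation, then `n ∈ f a` iff iterating `h` from `a` follows a
sequence of `inr`-steps of length `n` ending in an `inl`-value. -/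
theorem mem_coalgebra_morphism_iff_seq (A : Type) (h : A →. (Unit ⊕ A))
    (f : A →. ℕ)
    (hf : ∀ a : A,
      f a = (h a).bind
        (Sum.elim (fun _ => Part.some 0) (fun a' => Part.map Nat.succ (f a')))) :
    ∀ (a : A) (n : ℕ),
      n ∈ f a ↔
        ∃ seq : ℕ → A, seq 0 = a ∧
          (∀ k < n, h (seq k) = Part.some (Sum.inr (seq (k + 1)))) ∧
          h (seq n) = Part.some (Sum.inl ()) := by
  simpa only [Unique.exists_iff, PUnit.default_eq_unit]
    using mem_coalgebra_morphism_iff_seq_general h f hf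
end

section
/- Let g : ℕ → ℕ be a total function and define the (total) coalgebra step h : ℕ →. (Unit ⊕ ℕ) by h b = Part.some (Sum.inl ()) if g b % 2 = 0 and h b = Part.some (Sum.inr (b+1)) otherwise. Let f : ℕ →. ℕ be the unique partial function satisfying f b = (h b).bind (Sum.elim (fun _ => Part.some 0) (fun b' => Part.map Nat.succ (f b'))) for all b. Then for all n : ℕ, n ∈ f 0 if and only if g n % 2 = 0 and g m % 2 ≠ 0 for all m < n; that is, f 0 computes the safe minimization μb.(g b mod 2 = 0), being undefined when no such b exists. -/
/-- Morphisms from a coalgebra `h` of the endofunctor `X ↦ Unit ⊕ X` on sets and partial functions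
to the terminal coalgebra on `ℕ`, whose structure map sends `0` to `inl ()` and `n + 1` to `inr n`.
Since that map is invertible, the commuting square is written with its inverse, which turns it into
a recursive equation for `f`. -/
def IsTerminalCoalgebraMorphism {α : Type*} (h : α →. Unit ⊕ α) (f : α →. ℕ) : Prop :=
  ∀ a, f a = (h a).bind
    (Sum.elim (fun _ => Part.some 0) (fun a' => Part.map Nat.succ (f a')))

namespace IsTerminalCoalgebraMorphism

variable {α : Type*} {h : α →. Unit ⊕ α} {f : α →. ℕ}

theorem zero_mem_iff (hf : IsTerminalCoalgebraMorphism h f) {a : α} :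
    0 ∈ f a ↔ Sum.inl () ∈ h a := by
  rw [hf a]
  simp [Unique.exists_iff]

theorem succ_mem_iff (hf : IsTerminalCoalgebraMorphism h f) {a : α} {n : ℕ} :
    n + 1 ∈ f a ↔ ∃ a', Sum.inr a' ∈ h a ∧ n ∈ f a' := by
  rw [hf a]
  simp

end IsTerminalCoalgebraMorphism

theorem coalgebra_morphism_computes_safe_minimization_general {α : Type*} (p : α → Prop)
    [DecidablePred p] (next : α → α) {h : α →. Unit ⊕ α} {f : α →. ℕ}
    (hh : ∀ a, h a = if p a then Part.some (Sum.inl ()) else Part.some (Sum.inr (next a)))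
    (hf : IsTerminalCoalgebraMorphism h f) (a : α) (n : ℕ) :
    n ∈ f a ↔ p (next^[n] a) ∧ ∀ m < n, ¬ p (next^[m] a) := by
  have inl_mem_iff (b : α) : Sum.inl () ∈ h b ↔ p b := by
    rw [hh]
    split_ifs with hb <;> simp [hb]
  have inr_mem_iff (b c : α) : Sum.inr c ∈ h b ↔ ¬ p b ∧ c = next b := by
    rw [hh]
    split_ifs with hb <;> simp [hb]
  induction n generalizing a with
  | zero => simp [hf.zero_mem_iff, inl_mem_iff]
  | succ n ih =>
    calc n + 1 ∈ f a
      _ ↔ ¬ p a ∧ n ∈ f (next a) := by simp [hf.succ_mem_iff, inr_mem_iff, and_assoc]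
      _ ↔ ¬ p a ∧ p (next^[n] (next a)) ∧ ∀ m < n, ¬ p (next^[m] (next a)) :=
        and_congr_right' (ih (next a))
      _ ↔ p (next^[n + 1] a) ∧ ∀ m < n + 1, ¬ p (next^[m] a) := by
        simp only [Nat.forall_lt_succ_left, Function.iterate_succ_apply,
          Function.iterate_zero_apply, and_left_comm]

/-- Safe minimization via the terminal coalgebra.  For a total
`g : ℕ → ℕ`, let `h` be the coalgebra step that outputs `inl ()` when `g b`
is even and steps to `b + 1` otherwise.  The unique coalgebra morphism
`f : ℕ →. ℕ` then satisfies: `n ∈ f 0` iff `n` is the least `b` with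
`g b` even (i.e. `f 0` computes `μb.(g b mod 2 = 0)`, undefined when no
such `b` exists). -/
theorem coalgebra_morphism_computes_safe_minimization (g : ℕ → ℕ)
    (h : ℕ →. (Unit ⊕ ℕ))
    (hh : ∀ b : ℕ, h b = if g b % 2 = 0
      then Part.some (Sum.inl ()) else Part.some (Sum.inr (b + 1)))
    (f : ℕ →. ℕ)
    (hf : ∀ b : ℕ,
      f b = (h b).bind
        (Sum.elim (fun _ => Part.some 0) (fun b' => Part.map Nat.succ (f b')))) :
    ∀ n : ℕ, n ∈ f 0 ↔ g n % 2 = 0 ∧ ∀ m < n, g m % 2 ≠ 0 := by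
  simpa [Nat.succ_iterate] using
    coalgebra_morphism_computes_safe_minimization_general (g · % 2 = 0) Nat.succ hh hf 0
end
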